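/- arXiv:1911.11729 — 8 statements merged into one kernel-verified Lean document; each statement's English description precedes it below -/
import Mathlib

section
/- Let N be a group and let α be an automorphism of N with α ≠ id, and let N₁ = {n ∈ N : α(n) = n} be its fixed-point subgroup. If N₁ has finite index in N, then there exists a subgroup N₀ ≤ N₁ that is normal in N and has finite index in N, such that α(C_N(N₀)) = C_N(N₀) and for every n ∈ N one has n⁻¹·α(n) ∈ C_N(N₀); that is, the automorphism induced by α on the quotient N/C_N(N₀) is the identity. -/
/-! The normal core `N₀` of the fixed-point subgroup `N₁` works. As `α` fixes `N₀` pointwise,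
it preserves the centralizer of `N₀`. For `h ∈ N₀` and `n : N`, the conjugate `n * h * n⁻¹` lies
in `N₀` and is fixed by `α`, so `α n * h * (α n)⁻¹ = n * h * n⁻¹`, which says that `n⁻¹ * α n`
commutes with `h`. -/


/-- If `α ≠ id` is an automorphism of a group `N` whose fixed-point subgroup `N₁` has
finite index in `N`, then there is a subgroup `N₀ ≤ N₁`, normal and of finite index in `N`,
with `α(C_N(N₀)) = C_N(N₀)` and `n⁻¹ · α(n) ∈ C_N(N₀)` for every `n`, i.e. the automorphism
induced by `α` on `N / C_N(N₀)` is the identity. -/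
theorem stmt0 {N : Type*} [Group N] (α : MulAut N) (hα : α ≠ 1)
    (N₁ : Subgroup N) (hN₁ : (N₁ : Set N) = {n : N | α n = n})
    (hfin : N₁.index ≠ 0) :
    ∃ N₀ : Subgroup N, N₀ ≤ N₁ ∧ N₀.Normal ∧ N₀.index ≠ 0 ∧
      Subgroup.map α.toMonoidHom (Subgroup.centralizer (N₀ : Set N)) =
        Subgroup.centralizer (N₀ : Set N) ∧
      ∀ n : N, n⁻¹ * α n ∈ Subgroup.centralizer (N₀ : Set N) := by
  have : N₁.FiniteIndex := ⟨hfin⟩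
  have fix : ∀ h ∈ N₁.normalCore, α h = h := fun h hh => by
    have h1 : h ∈ (N₁ : Set N) := N₁.normalCore_le hh
    rwa [hN₁] at h1
  -- `α` and its inverse fix `N₀` pointwise, so commuting with `N₀` is unaffected by `α`.
  have cent : ∀ x, α x ∈ Subgroup.centralizer (N₁.normalCore : Set N) ↔
      x ∈ Subgroup.centralizer (N₁.normalCore : Set N) := fun x => by
    simp only [Subgroup.mem_centralizer_iff]
    refine forall₂_congr fun h hh => ?_
    rw [← α.injective.eq_iff (a := h * x), map_mul, map_mul, fix h hh]
  refine ⟨N₁.normalCore, N₁.normalCore_le, inferInstance, Subgroup.FiniteIndex.index_ne_zero,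
    ?_, fun n => ?_⟩
  · ext y
    constructor
    · rintro ⟨x, hx, rfl⟩
      exact (cent x).2 hx
    · intro hy
      obtain ⟨x, rfl⟩ := α.surjective y
      exact ⟨x, (cent x).1 hy, rfl⟩
  · rw [Subgroup.mem_centralizer_iff]
    intro h hh
    have h2 := fix _ (N₁.normalCore_normal.conj_mem h hh n)
    rw [map_mul, map_mul, fix h hh, map_inv, mul_inv_eq_iff_eq_mul] at h2
    rw [mul_assoc, h2]
    group
end

section
/- Let N be an icc group and let α be an automorphism of N with α ≠ id. Then the fixed-point subgroup N₁ = {n ∈ N : α(n) = n} has infinite index in N. -/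
/-!
If the fixed-point subgroup had finite index, so would its normal core `M`. For `n : N` and
`m ∈ M`, both `m` and `n * m * n⁻¹` are fixed by `α`, hence `n⁻¹ * α n` commutes with `m`.
So `n⁻¹ * α n` is centralized by a subgroup of finite index and has a finite conjugacy class
(`finite_conj_of_commute`); by the icc property it is `1`, that is, `α n = n`, for every `n`.
-/

theorem finite_conj_of_commute {N : Type*} [Group N] (M : Subgroup N) [M.FiniteIndex] (k : N)
    (hk : ∀ m ∈ M, k * m = m * k) : {m : N | ∃ g : N, g * k * g⁻¹ = m}.Finite := by
  -- the conjugate `g * k * g⁻¹` depends only on the left coset `g M`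
  refine (Set.finite_range fun q : N ⧸ M => q.out * k * q.out⁻¹).subset ?_
  rintro _ ⟨g, rfl⟩
  refine ⟨(g : N ⧸ M), ?_⟩
  obtain ⟨m, hm⟩ := QuotientGroup.mk_out_eq_mul M g
  have h := hk m m.2
  simp only [hm, mul_inv_rev]
  calc g * m * k * ((m : N)⁻¹ * g⁻¹) = g * (m * k) * ((m : N)⁻¹ * g⁻¹) := by group
    _ = g * (k * m) * ((m : N)⁻¹ * g⁻¹) := by rw [h]
    _ = g * k * g⁻¹ := by group

/-- If `N` is an icc group and `α ≠ id` is an automorphism of `N`, then the fixed-point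
subgroup `N₁ = {n | α n = n}` has infinite index in `N`. -/
theorem stmt1 {N : Type*} [Group N]
    (hicc : ∀ n : N, n ≠ 1 → {m : N | ∃ g : N, g * n * g⁻¹ = m}.Infinite)
    (α : MulAut N) (hα : α ≠ 1)
    (N₁ : Subgroup N) (hN₁ : (N₁ : Set N) = {n : N | α n = n}) :
    N₁.index = 0 := by
  by_contra hidx
  have : N₁.FiniteIndex := ⟨hidx⟩
  have hfix : ∀ m ∈ N₁.normalCore, α m = m := fun m hm => by
    have h : m ∈ (N₁ : Set N) := N₁.normalCore_le hm
    rwa [hN₁] at h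
  refine hα (MulEquiv.ext fun n => ?_)
  by_contra hn
  refine hicc (n⁻¹ * α n) (fun h => hn (inv_mul_eq_one.mp h).symm)
    (finite_conj_of_commute N₁.normalCore _ fun m hm => ?_)
  have h := hfix _ (N₁.normalCore_normal.conj_mem m hm n)
  rw [map_mul, map_mul, map_inv, hfix m hm, mul_inv_eq_iff_eq_mul] at h
  rw [mul_assoc, h]
  group
end

section
/- Let N be a group and let α be an automorphism of N of infinite order (α^m ≠ id for every m ≥ 1) whose fixed-point subgroup N₁ = {n ∈ N : α(n) = n} has finite index in N. Then there exist an integer k ≥ 1 and a subgroup N₀ ≤ N₁ that is normal in N and has finite index in N, such that α(Z(N₀)) = Z(N₀) and for every n ∈ N one has n⁻¹·α^k(n) ∈ Z(N₀); that is, the automorphism induced by α on the quotient N/Z(N₀) has finite order. -/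
/-!
The witness is the normal core `N₀` of `N₁`. For `n ∈ N` and `h ∈ N₀`, both `h` and `n h n⁻¹` lie in
`N₀`, hence are fixed by every power `β` of `α`; comparing `β (n h n⁻¹) = β(n) h β(n)⁻¹` with
`n h n⁻¹` shows that `n⁻¹ β(n)` centralizes `N₀`. On the other hand `α` preserves `N₀`, so it
permutes the finite quotient `N / N₀`; if `k` is the order of this permutation, then
`n⁻¹ α^k(n) ∈ N₀` for all `n`. Together these put `n⁻¹ α^k(n)` in the center of `N₀`, which `α` fixes
pointwise.
-/

/-- An automorphism fixing a normal subgroup pointwise moves each element by an element of the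
centralizer of that subgroup. -/
theorem inv_mul_apply_mem_centralizer {N : Type*} [Group N] (β : MulAut N) (H : Subgroup N)
    [H.Normal] (hfix : ∀ h ∈ H, β h = h) (n : N) :
    n⁻¹ * β n ∈ Subgroup.centralizer (H : Set N) := by
  rw [Subgroup.mem_centralizer_iff]
  intro h hh
  have h1 := hfix _ (Subgroup.Normal.conj_mem inferInstance h hh n)
  rw [map_mul, map_mul, map_inv, hfix h hh] at h1
  have h2 : β n * h = n * h * n⁻¹ * β n := by rw [← h1]; group
  rw [mul_assoc, h2]
  group

/-- An automorphism preserving a normal subgroup of finite index has a positive power inducing the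
identity on the quotient. -/
theorem exists_pow_inv_mul_apply_mem {N : Type*} [Group N] (α : MulAut N) (H : Subgroup N)
    [H.Normal] (hmap : H.map α.toMonoidHom = H) (hfin : H.index ≠ 0) :
    ∃ k : ℕ, 1 ≤ k ∧ ∀ n : N, n⁻¹ * (α ^ k) n ∈ H := by
  haveI : H.FiniteIndex := ⟨hfin⟩
  let β : Equiv.Perm (N ⧸ H) := (QuotientGroup.congr H H α hmap).toEquiv
  have hβ (n : N) : β (n : N ⧸ H) = (α n : N) := rfl
  have hpow (k : ℕ) (n : N) : (β ^ k) (n : N ⧸ H) = ((α ^ k) n : N) := by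
    induction k with
    | zero => rfl
    | succ k ih => rw [pow_succ', pow_succ', Equiv.Perm.mul_apply, ih, hβ, MulAut.mul_apply]
  obtain ⟨k, hk, hk1⟩ := (isOfFinOrder_of_finite β).exists_pow_eq_one
  refine ⟨k, hk, fun n => ?_⟩
  rw [← QuotientGroup.eq, ← hpow, hk1, Equiv.Perm.one_apply]


/-- If `α` is an automorphism of infinite order of a group `N` whose fixed-point subgroup
`N₁` has finite index, then there are `k ≥ 1` and a subgroup `N₀ ≤ N₁`, normal and of finite
index in `N`, with `α(Z(N₀)) = Z(N₀)` and `n⁻¹ · α^k(n) ∈ Z(N₀)` for every `n`, i.e. the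
automorphism induced by `α` on `N / Z(N₀)` has finite order.  Here `Z(N₀)`, the center of
`N₀` viewed as a subgroup of `N`, is `Subgroup.centralizer N₀ ⊓ N₀`. -/
theorem stmt2 {N : Type*} [Group N] (α : MulAut N)
    (hord : ∀ m : ℕ, 1 ≤ m → α ^ m ≠ 1)
    (N₁ : Subgroup N) (hN₁ : (N₁ : Set N) = {n : N | α n = n})
    (hfin : N₁.index ≠ 0) :
    ∃ k : ℕ, 1 ≤ k ∧ ∃ N₀ : Subgroup N, N₀ ≤ N₁ ∧ N₀.Normal ∧ N₀.index ≠ 0 ∧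
      Subgroup.map α.toMonoidHom (Subgroup.centralizer (N₀ : Set N) ⊓ N₀) =
        Subgroup.centralizer (N₀ : Set N) ⊓ N₀ ∧
      ∀ n : N, n⁻¹ * (α ^ k) n ∈ Subgroup.centralizer (N₀ : Set N) ⊓ N₀ := by
  have hfix : ∀ h ∈ N₁.normalCore, α h = h := fun h hh => by
    have h1 : h ∈ (N₁ : Set N) := N₁.normalCore_le hh
    rwa [hN₁] at h1
  have hfixpow (k : ℕ) : ∀ h ∈ N₁.normalCore, (α ^ k) h = h := fun h hh => by
    induction k with
    | zero => rfl
    | succ k ih => rw [pow_succ', MulAut.mul_apply, ih, hfix h hh]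
  have hmap (K : Subgroup N) (hK : K ≤ N₁.normalCore) : K.map α.toMonoidHom = K := by
    ext x
    constructor
    · rintro ⟨y, hy, rfl⟩
      change α y ∈ K
      rwa [hfix y (hK hy)]
    · exact fun hx => ⟨x, hx, hfix x (hK hx)⟩
  haveI : N₁.FiniteIndex := ⟨hfin⟩
  have hidx : N₁.normalCore.index ≠ 0 := Subgroup.FiniteIndex.index_ne_zero
  obtain ⟨k, hk, hkmem⟩ := exists_pow_inv_mul_apply_mem α N₁.normalCore (hmap _ le_rfl) hidx
  exact ⟨k, hk, N₁.normalCore, N₁.normalCore_le, inferInstance, hidx, hmap _ inf_le_right,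
    fun n => ⟨inv_mul_apply_mem_centralizer (α ^ k) _ (hfixpow k) n, hkmem n⟩⟩
end

section
/- Let N be a group in which every finite-index subgroup has trivial center, and let α be an automorphism of N whose fixed-point subgroup N₁ = {n ∈ N : α(n) = n} has finite index in N. Then α has finite order in Aut(N), i.e., there exists m ≥ 1 with α^m = id. -/
/-!
The automorphism `α` is in fact the identity. Let `K` be the normal core of `N₁`; it has finite
index and is fixed pointwise by `α`. For `n ∈ N` and `k ∈ K`, both `k` and `n * k * n⁻¹` are fixed,
so `z = n⁻¹ * α n` commutes with `k`. Thus the centralizer of `z` contains `K`, so has finite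
index, and `z` is central in it. The hypothesis gives `z = 1`, that is, `α n = n`.
-/

/-- If every finite-index subgroup of `N` has trivial center and `α` is an automorphism of
`N` whose fixed-point subgroup has finite index, then `α` has finite order. -/
theorem stmt3 {N : Type*} [Group N]
    (htriv : ∀ H : Subgroup N, H.index ≠ 0 →
      ∀ z ∈ H, (∀ h ∈ H, z * h = h * z) → z = 1)
    (α : MulAut N)
    (N₁ : Subgroup N) (hN₁ : (N₁ : Set N) = {n : N | α n = n})
    (hfin : N₁.index ≠ 0) :
    ∃ m : ℕ, 1 ≤ m ∧ α ^ m = 1 := by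
  have hmem : ∀ x ∈ N₁, α x = x := fun x hx => by
    have : x ∈ (N₁ : Set N) := hx
    rwa [hN₁] at this
  haveI : N₁.FiniteIndex := ⟨hfin⟩
  have hK : N₁.normalCore.index ≠ 0 := Subgroup.FiniteIndex.index_ne_zero
  refine ⟨1, le_rfl, ?_⟩
  rw [pow_one]
  ext n
  have hcomm : ∀ k ∈ N₁.normalCore, k * (n⁻¹ * α n) = (n⁻¹ * α n) * k := by
    intro k hk
    have h1 := hmem k (N₁.normalCore_le hk)
    have h2 := hmem _ (N₁.normalCore_le (N₁.normalCore_normal.conj_mem k hk n))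
    rw [map_mul, map_mul, map_inv, h1, mul_inv_eq_iff_eq_mul] at h2
    rw [mul_assoc n⁻¹, h2]
    group
  have hle : N₁.normalCore ≤ Subgroup.centralizer {n⁻¹ * α n} := fun k hk =>
    Subgroup.mem_centralizer_singleton_iff.2 (hcomm k hk)
  have hz : n⁻¹ * α n = 1 := by
    refine htriv (Subgroup.centralizer {n⁻¹ * α n})
      (fun h => hK (Nat.eq_zero_of_zero_dvd (h ▸ Subgroup.index_dvd_of_le hle))) _
      (Subgroup.mem_centralizer_singleton_iff.2 rfl) fun h hh => ?_
    exact (Subgroup.mem_centralizer_singleton_iff.1 hh).symm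
  exact (inv_mul_eq_one.1 hz).symm
end

section
/- Let N be an icc group and let σ : Q → Aut(N) be an outer action of a group Q on N, meaning that σ_q is an inner automorphism of N only when q = 1. Then for every element g of the semidirect product N ⋊_σ Q with g ≠ 1, the set {n·g·n⁻¹ : n ∈ N} of conjugates of g by elements of the canonical copy of N is infinite. In particular, the group N ⋊_σ Q is icc. -/
/-! For `x : N`, the commutator `c = x⁻¹ g x g⁻¹` lies in `N`, and for `n : N` one has
`n c n⁻¹ = ((n x⁻¹) g (n x⁻¹)⁻¹) (n g n⁻¹)⁻¹`. So if the set `S` of `N`-conjugates of `g` is finite,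
the `N`-conjugacy class of `c` lies in the finite set `S S⁻¹`, and `c = 1` because `N` is icc.
Hence `g = (a, q)` centralizes `N`. This says that `φ q` is conjugation by `a⁻¹`, so `q = 1` by
outerness; then `a` is central in the icc group `N`, so `a = 1`. -/


/-- If `N` is icc and `σ : Q → Aut N` is an outer action (only `q = 1` acts by an inner
automorphism), then every nontrivial element of `N ⋊[σ] Q` has infinitely many conjugates
under the canonical copy of `N`; in particular `N ⋊[σ] Q` is icc. -/
theorem stmt5 {N Q : Type*} [Group N] [Group Q]
    (hicc : ∀ n : N, n ≠ 1 → {m : N | ∃ g : N, g * n * g⁻¹ = m}.Infinite)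
    (φ : Q →* MulAut N)
    (houter : ∀ q : Q, (∃ n₀ : N, ∀ x : N, φ q x = n₀ * x * n₀⁻¹) → q = 1) :
    ∀ g : N ⋊[φ] Q, g ≠ 1 →
      {x : N ⋊[φ] Q | ∃ n : N,
        SemidirectProduct.inl n * g * (SemidirectProduct.inl n)⁻¹ = x}.Infinite ∧
      {x : N ⋊[φ] Q | ∃ k : N ⋊[φ] Q, k * g * k⁻¹ = x}.Infinite := by
  intro g hg
  have key : {x : N ⋊[φ] Q | ∃ n : N,
      SemidirectProduct.inl n * g * (SemidirectProduct.inl n)⁻¹ = x}.Infinite := by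
    intro hfin
    have hfix : ∀ x : N, x⁻¹ * (g.left * φ g.right x * g.left⁻¹) = 1 := by
      intro x
      by_contra hc
      have hcomm : (SemidirectProduct.inl (x⁻¹ * (g.left * φ g.right x * g.left⁻¹)) : N ⋊[φ] Q) =
          (SemidirectProduct.inl x)⁻¹ * g * SemidirectProduct.inl x * g⁻¹ := by
        ext <;> simp [mul_assoc]
      refine hicc _ hc (Set.Finite.of_finite_image (f := (SemidirectProduct.inl : N →* N ⋊[φ] Q))
        ((hfin.image2 (fun y z => y * z⁻¹) hfin).subset ?_)
        SemidirectProduct.inl_injective.injOn)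
      rintro _ ⟨_, ⟨n, rfl⟩, rfl⟩
      refine ⟨_, ⟨n * x⁻¹, rfl⟩, _, ⟨n, rfl⟩, ?_⟩
      rw [map_mul _ (n * _), map_mul _ n (_ * _), hcomm]
      simp only [map_mul, map_inv]
      group
    have hconj : ∀ x : N, φ g.right x = g.left⁻¹ * x * g.left := by
      intro x
      have h := inv_mul_eq_one.mp (hfix x)
      conv_rhs => rw [h]
      group
    have hq : g.right = 1 := houter _ ⟨g.left⁻¹, fun x => by rw [hconj, inv_inv]⟩
    have ha : g.left = 1 := by
      by_contra hne
      refine hicc _ hne ((Set.finite_singleton g.left).subset ?_)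
      rintro _ ⟨x, rfl⟩
      have h := hconj x
      rw [hq, map_one, MulAut.one_apply, mul_assoc, eq_inv_mul_iff_mul_eq] at h
      rw [Set.mem_singleton_iff, ← h, mul_inv_cancel_right]
    exact hg (SemidirectProduct.ext ha hq)
  refine ⟨key, key.mono ?_⟩
  rintro _ ⟨n, rfl⟩
  exact ⟨_, rfl⟩
end

section
/- Let G be a group which is the union of an increasing sequence of subgroups L₀ ≤ L₁ ≤ L₂ ≤ ⋯, each of which is infinite cyclic (isomorphic to ℤ). Then G is isomorphic to a subgroup of the additive group of rational numbers (ℚ, +). In particular, G is a torsion-free abelian group of rank one. -/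
/-!
Any two elements of `G` lie in a common `L n ≅ ℤ`, so `G` is abelian and torsion-free. Fix `e ≠ 1`
in `L 0`. If `g` and `e` correspond to the integers `x` and `y ≠ 0` under `L n ≅ ℤ`, then
`g ^ y = e ^ x`; so every `g` satisfies a relation `g ^ b = e ^ a` with `b ≠ 0`. The ratio `a / b`
depends only on `g` because `e` has infinite order, and `g ↦ a / b` is the embedding into `ℚ`:
multiplying relations adds the ratios, and ratio `0` means that `g` is torsion, so `g = 1`.
-/

/-- Two elements of an infinite cyclic subgroup satisfy the relation given by exchanging their
exponents: `g = t ^ x` and `e = t ^ y` imply `g ^ y = e ^ x`, and `y ≠ 0` when `e ≠ 1`. -/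
lemma exists_zpow_eq_zpow_of_mem {G : Type*} [Group G] (H : Subgroup G)
    (φ : ↥H ≃* Multiplicative ℤ) {e g : G} (he : e ∈ H) (hg : g ∈ H) (h1 : e ≠ 1) :
    ∃ a b : ℤ, b ≠ 0 ∧ g ^ b = e ^ a := by
  refine ⟨(φ ⟨g, hg⟩).toAdd, (φ ⟨e, he⟩).toAdd, ?_, ?_⟩
  · intro h
    have h' : φ ⟨e, he⟩ = 1 := h
    rw [map_eq_one_iff φ φ.injective] at h'
    exact h1 (congrArg Subtype.val h')
  · have h : (⟨g, hg⟩ : H) ^ (φ ⟨e, he⟩).toAdd = ⟨e, he⟩ ^ (φ ⟨g, hg⟩).toAdd := by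
      apply φ.injective
      rw [map_zpow, map_zpow]
      apply Multiplicative.toAdd.injective
      rw [toAdd_zpow, toAdd_zpow, smul_eq_mul, smul_eq_mul, mul_comm]
    exact congrArg Subtype.val h

/-- A torsion-free abelian group in which every element has a nonzero power in `⟨e⟩`, for a fixed
`e ≠ 1`, embeds into `(ℚ, +)`. -/
lemma exists_injective_hom_rat {G : Type*} [Group G] (e : G) (he : e ≠ 1)
    (hcomm : ∀ a b : G, a * b = b * a)
    (htf : ∀ (g : G) (n : ℤ), n ≠ 0 → g ^ n = 1 → g = 1)
    (hex : ∀ g : G, ∃ a b : ℤ, b ≠ 0 ∧ g ^ b = e ^ a) :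
    ∃ f : G →* Multiplicative ℚ, Function.Injective f := by
  choose a b hb hab using hex
  have hinj : ∀ m n : ℤ, e ^ m = e ^ n → m = n := by
    intro m n h
    by_contra hmn
    exact he (htf e (m - n) (sub_ne_zero.mpr hmn) (by rw [zpow_sub, h, mul_inv_cancel]))
  have hbQ : ∀ g, (b g : ℚ) ≠ 0 := fun g => Int.cast_ne_zero.mpr (hb g)
  have hmul : ∀ g h : G,
      (a (g * h) : ℚ) / b (g * h) = (a g : ℚ) / b g + (a h : ℚ) / b h := by
    intro g h
    have key : a (g * h) * (b g * b h) = (a g * b h + a h * b g) * b (g * h) := by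
      -- Both sides are the exponent of `e` in `(g * h) ^ (b (g * h) * b g * b h)`.
      apply hinj
      have h1 : (g * h) ^ (b g * b h) = e ^ (a g * b h + a h * b g) := by
        rw [(show Commute g h from hcomm g h).mul_zpow, zpow_mul, hab g, mul_comm (b g),
          zpow_mul h, hab h, zpow_add, zpow_mul, zpow_mul]
      rw [zpow_mul, ← hab, zpow_mul e, ← h1, ← zpow_mul, ← zpow_mul, mul_comm]
    have keyQ : (a (g * h) : ℚ) * (b g * b h) = (a g * b h + a h * b g) * b (g * h) := by
      exact_mod_cast key
    rw [div_add_div _ _ (hbQ g) (hbQ h), div_eq_div_iff (hbQ _) (mul_ne_zero (hbQ g) (hbQ h)),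
      keyQ]
    ring
  refine ⟨MonoidHom.mk' (fun g => Multiplicative.ofAdd ((a g : ℚ) / b g)) ?_, ?_⟩
  · intro g h
    rw [hmul, ofAdd_add]
  · rw [injective_iff_map_eq_one]
    intro g hg
    have h0 : (a g : ℚ) / b g = 0 := hg
    have ha : a g = 0 := by simpa [hb g] using h0
    exact htf g (b g) (hb g) (by rw [hab, ha, zpow_zero])

/-- A group that is the union of an increasing sequence of infinite cyclic subgroups embeds
into `(ℚ, +)`; in particular it is torsion-free abelian (of rank one). -/
theorem stmt8 {G : Type*} [Group G] (L : ℕ → Subgroup G)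
    (hmono : Monotone L)
    (hunion : ∀ g : G, ∃ n, g ∈ L n)
    (hcyc : ∀ n, Nonempty (↥(L n) ≃* Multiplicative ℤ)) :
    (∃ f : G →* Multiplicative ℚ, Function.Injective f) ∧
    (∀ a b : G, a * b = b * a) ∧
    (∀ g : G, g ≠ 1 → ∀ n : ℕ, 0 < n → g ^ n ≠ 1) := by
  have hpair : ∀ g h : G, ∃ n, g ∈ L n ∧ h ∈ L n := by
    intro g h
    obtain ⟨m, hm⟩ := hunion g
    obtain ⟨n, hn⟩ := hunion h
    exact ⟨max m n, hmono (le_max_left m n) hm, hmono (le_max_right m n) hn⟩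
  have hcomm : ∀ a b : G, a * b = b * a := by
    intro g h
    obtain ⟨n, hg, hh⟩ := hpair g h
    obtain ⟨φ⟩ := hcyc n
    have : (⟨g, hg⟩ : L n) * ⟨h, hh⟩ = ⟨h, hh⟩ * ⟨g, hg⟩ :=
      φ.injective (by rw [map_mul, map_mul, mul_comm])
    exact congrArg Subtype.val this
  have htf : ∀ (g : G) (n : ℤ), n ≠ 0 → g ^ n = 1 → g = 1 := by
    intro g n hn h
    obtain ⟨k, hg⟩ := hunion g
    obtain ⟨φ⟩ := hcyc k
    have h1 : (⟨g, hg⟩ : L k) ^ n = 1 := Subtype.ext h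
    have h2 : n * (φ ⟨g, hg⟩).toAdd = 0 := by
      rw [← smul_eq_mul, ← toAdd_zpow, ← map_zpow, h1, map_one, toAdd_one]
    have h3 : φ ⟨g, hg⟩ = 1 := (mul_eq_zero.mp h2).resolve_left hn
    rw [map_eq_one_iff φ φ.injective] at h3
    exact congrArg Subtype.val h3
  obtain ⟨φ⟩ := hcyc 0
  have : Nontrivial (L 0) := φ.toEquiv.nontrivial
  obtain ⟨e, he⟩ := exists_ne (1 : L 0)
  have he' : (e : G) ≠ 1 := fun h => he (Subtype.ext h)
  refine ⟨exists_injective_hom_rat (e : G) he' hcomm htf fun g => ?_, hcomm, ?_⟩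
  · obtain ⟨n, hen, hgn⟩ := hpair (e : G) g
    obtain ⟨ψ⟩ := hcyc n
    exact exists_zpow_eq_zpow_of_mem (L n) ψ hen hgn he'
  · intro g hg n hn h
    exact hg (htf g n (by exact_mod_cast hn.ne') (by rw [zpow_natCast, h]))
end

section
/- Let G be a group, H₁ and H₂ subgroups of G, and S, T ⊆ G finite subsets. Then there exist finite subsets R, U ⊆ G such that T·H₂·T ∩ S·H₁·S ⊆ U·(⋃_{r ∈ R} (H₂ ∩ r·H₁·r⁻¹))·U. -/
/-!
For `t, t' ∈ T` and `s, s' ∈ S`, the set `t H₂ t' ∩ s H₁ s'` is, as soon as it contains some `g₀`,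
a right translate of a subgroup: for `g` in it, `g g₀⁻¹` lies in `t H₂ t⁻¹ ∩ s H₁ s⁻¹`, which is the
conjugate by `t` of `H₂ ∩ r H₁ r⁻¹` with `r = t⁻¹ s`. Hence `g ∈ t (H₂ ∩ r H₁ r⁻¹) (t⁻¹ g₀)`.
There are finitely many quadruples `(t, t', s, s')`, so it suffices to fix one `g₀` for each and
let `R` collect the elements `t⁻¹ s`, and `U` the elements `t` and `t⁻¹ g₀`.
-/

open Pointwise in
/-- For subgroups `H₁, H₂ ≤ G` and finite sets `S, T ⊆ G`, there are finite sets
`R, U ⊆ G` with `T·H₂·T ∩ S·H₁·S ⊆ U·(⋃_{r ∈ R} (H₂ ∩ r·H₁·r⁻¹))·U`. -/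
theorem stmt11 {G : Type*} [Group G] (H₁ H₂ : Subgroup G) (S T : Finset G) :
    ∃ R U : Finset G,
      ((T : Set G) * (H₂ : Set G) * (T : Set G)) ∩
        ((S : Set G) * (H₁ : Set G) * (S : Set G)) ⊆
      (U : Set G) *
        (⋃ r ∈ R, ((H₂ : Set G) ∩ (fun x => r * x * r⁻¹) '' (H₁ : Set G))) *
        (U : Set G) := by
  classical
  -- a base point `f t t' s s'` in each nonempty `t H₂ t' ∩ s H₁ s'`
  have key : ∀ t t' s s' : G, ∃ g₀ : G,
      (∃ g, (∃ a ∈ H₂, t * a * t' = g) ∧ ∃ b ∈ H₁, s * b * s' = g) →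
        (∃ a ∈ H₂, t * a * t' = g₀) ∧ ∃ b ∈ H₁, s * b * s' = g₀ := by
    intro t t' s s'
    by_cases h : ∃ g, (∃ a ∈ H₂, t * a * t' = g) ∧ ∃ b ∈ H₁, s * b * s' = g
    · obtain ⟨g, hg⟩ := h
      exact ⟨g, fun _ => hg⟩
    · exact ⟨1, fun h' => absurd h' h⟩
  choose f hf using key
  refine ⟨(T ×ˢ S).image fun p => p.1⁻¹ * p.2,
    T ∪ ((T ×ˢ T) ×ˢ (S ×ˢ S)).image fun p => p.1.1⁻¹ * f p.1.1 p.1.2 p.2.1 p.2.2, ?_⟩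
  rintro g ⟨⟨_, ⟨t, ht, a, ha, rfl⟩, t', ht', hg₂⟩, ⟨_, ⟨s, hs, b, hb, rfl⟩, s', hs', hg₁⟩⟩
  simp only [Finset.mem_coe, SetLike.mem_coe] at ht ha ht' hs hb hs' hg₁ hg₂
  obtain ⟨⟨a₀, ha₀, h₂⟩, b₀, hb₀, h₁⟩ := hf t t' s s' ⟨g, ⟨a, ha, hg₂⟩, b, hb, hg₁⟩
  have e₂ : g * (f t t' s s')⁻¹ = t * (a * a₀⁻¹) * t⁻¹ := by rw [← hg₂, ← h₂]; group
  have e₁ : g * (f t t' s s')⁻¹ = s * (b * b₀⁻¹) * s⁻¹ := by rw [← hg₁, ← h₁]; group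
  refine ⟨t * (a * a₀⁻¹), ⟨t, ?_, a * a₀⁻¹, ?_, rfl⟩, t⁻¹ * f t t' s s', ?_, ?_⟩
  · exact Finset.mem_coe.2 (Finset.mem_union_left _ ht)
  · refine Set.mem_iUnion₂.2 ⟨t⁻¹ * s, ?_, H₂.mul_mem ha (H₂.inv_mem ha₀), b * b₀⁻¹,
      H₁.mul_mem hb (H₁.inv_mem hb₀), ?_⟩
    · exact Finset.mem_image.2 ⟨(t, s), Finset.mk_mem_product ht hs, rfl⟩
    · calc t⁻¹ * s * (b * b₀⁻¹) * (t⁻¹ * s)⁻¹ = t⁻¹ * (s * (b * b₀⁻¹) * s⁻¹) * t := by group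
        _ = t⁻¹ * (t * (a * a₀⁻¹) * t⁻¹) * t := by rw [← e₁, e₂]
        _ = a * a₀⁻¹ := by group
  · exact Finset.mem_coe.2 (Finset.mem_union_right _ (Finset.mem_image.2
      ⟨((t, t'), (s, s')), by simp [ht, ht', hs, hs'], rfl⟩))
  · calc t * (a * a₀⁻¹) * (t⁻¹ * f t t' s s') = t * (a * a₀⁻¹) * t⁻¹ * f t t' s s' := by group
      _ = g := by rw [← e₂]; group
end

section
/- Let σ : Q → Aut(N) be an action of a group Q on a group N with trivial stabilizers, meaning that whenever σ_q(n) = n for some q ∈ Q and n ∈ N, one has q = 1 or n = 1. Then the canonical copy of Q is a malnormal subgroup of the semidirect product N ⋊_σ Q: for every g ∈ (N ⋊_σ Q) not lying in {1} × Q, the intersection ({1} × Q) ∩ g·({1} × Q)·g⁻¹ is trivial. -/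
/-- If the action `σ : Q → Aut N` has trivial stabilizers, then the canonical copy of `Q`
is malnormal in `N ⋊[σ] Q`. -/
theorem stmt12 {N Q : Type*} [Group N] [Group Q] (φ : Q →* MulAut N)
    (hfree : ∀ (q : Q) (n : N), φ q n = n → q = 1 ∨ n = 1) :
    ∀ g : N ⋊[φ] Q,
      g ∉ (SemidirectProduct.inr : Q →* N ⋊[φ] Q).range →
      (SemidirectProduct.inr : Q →* N ⋊[φ] Q).range ⊓
        Subgroup.map (MulAut.conj g).toMonoidHom
          (SemidirectProduct.inr : Q →* N ⋊[φ] Q).range = ⊥ := by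
  intro g hg
  rw [eq_bot_iff]
  rintro x ⟨⟨a, rfl⟩, y, ⟨p, rfl⟩, hy⟩
  have h : g * SemidirectProduct.inr p = SemidirectProduct.inr a * g :=
    mul_inv_eq_iff_eq_mul.mp hy
  -- Comparing `N`-components shows that `a` fixes the `N`-component of `g`.
  have hfix : φ a g.left = g.left := by
    simpa using (congrArg SemidirectProduct.left h).symm
  rcases hfree a g.left hfix with rfl | hn
  · simp
  · exact absurd ⟨g.right, SemidirectProduct.ext (by simp [hn]) (by simp)⟩ hg
end
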